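/- Let q be a prime power and n a positive integer. Then the number of conjugacy classes of GL(n, F_q) is at most q^n. Equivalently, the number of irreducible complex characters of GL(n, F_q) is at most q^n. -/

import Mathlib

open Matrix

def IsIrrChar (G : Type) [Group G] (f : G → ℂ) : Prop :=
  ∃ V : FDRep ℂ G, CategoryTheory.Simple V ∧ FDRep.character V = f

theorem irr_le (G : Type) [Group G] [Finite G] :
    Nat.card {χ : G → ℂ // IsIrrChar G χ} ≤ Nat.card (ConjClasses G) := by
  classical
  have := Fintype.ofFinite G
  have : Finite (ConjClasses G) := inferInstance
  have := Fintype.ofFinite (ConjClasses G)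
  have hne : (Nat.card G : ℂ) ≠ 0 := by
    exact_mod_cast (Nat.card_pos (α := G)).ne'
  let _ : Invertible (Nat.card G : ℂ) := invertibleOfNonzero hne
  let b : {χ : G → ℂ // IsIrrChar G χ} → (ConjClasses G → ℂ) := fun χ c => χ.1 (Quotient.out c)
  have hb : ∀ χ g, b χ (ConjClasses.mk g) = χ.1 g := by
    rintro ⟨χ, V, hV, rfl⟩ g
    have h1 : ConjClasses.mk (Quotient.out (ConjClasses.mk g)) = ConjClasses.mk g :=
      Quotient.out_eq _
    rw [ConjClasses.mk_eq_mk_iff_isConj, isConj_comm, isConj_iff] at h1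
    obtain ⟨c, hc⟩ := h1
    change V.character (Quotient.out (ConjClasses.mk g)) = _
    rw [← hc, FDRep.char_conj]
  have horth : ∀ χ ψ : {χ : G → ℂ // IsIrrChar G χ},
      (Nat.card G : ℂ)⁻¹ * ∑ g : G, χ.1 g * ψ.1 g⁻¹ = if χ = ψ then 1 else 0 := by
    intro χ ψ
    obtain ⟨V, hV, hVχ⟩ := χ.2
    obtain ⟨W, hW, hWψ⟩ := ψ.2
    have := FDRep.char_orthonormal V W
    rw [← hVχ, ← hWψ]
    by_cases h : χ = ψ
    · rw [if_pos h]
      have h2 := FDRep.char_orthonormal V V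
      rw [if_pos ⟨CategoryTheory.Iso.refl _⟩] at h2
      rw [← h2, hVχ, hWψ, h]
    · rw [if_neg h, this, if_neg]
      rintro ⟨i⟩
      exact h (Subtype.ext (by rw [← hVχ, ← hWψ, FDRep.char_iso i]))
  have hli : LinearIndependent ℂ b := by
    rw [linearIndependent_iff']
    intro s c hc ψ hψ
    have h1 : ∀ g, ∑ χ ∈ s, c χ * χ.1 g = 0 := by
      intro g
      have := congrFun hc (ConjClasses.mk g)
      simpa [hb] using this
    have h2 : ∑ χ ∈ s, c χ * ((Nat.card G : ℂ)⁻¹ * ∑ g : G, χ.1 g * ψ.1 g⁻¹) = 0 := by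
      have : ∑ g : G, (∑ χ ∈ s, c χ * χ.1 g) * ((Nat.card G : ℂ)⁻¹ * ψ.1 g⁻¹) = 0 := by
        simp [h1]
      rw [← this]
      simp_rw [Finset.sum_mul, Finset.mul_sum]
      rw [Finset.sum_comm]
      refine Finset.sum_congr rfl fun _ _ => Finset.sum_congr rfl fun _ _ => by ring
    simp only [horth] at h2
    simpa [hψ] using h2
  have : Finite {χ : G → ℂ // IsIrrChar G χ} := hli.finite
  have := Fintype.ofFinite {χ : G → ℂ // IsIrrChar G χ}
  have := hli.fintype_card_le_finrank
  simpa [Nat.card_eq_fintype_card] using this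

section main
open Polynomial

section comb
variable {F : Type} [Field F]

def GoodP (p : F[X]) : Prop := p.Monic ∧ p.coeff 0 ≠ 0

def TS (F : Type) [Field F] (N j n : ℕ) : Set (ℕ → F[X]) :=
  {h | (∀ i, GoodP (h i)) ∧ (∀ i, i < j ∨ N < i → h i = 1) ∧
    ∑ i ∈ Finset.range (N+1), i * (h i).natDegree = n}

open Classical in
noncomputable def extP (a : F) (p : F[X]) : F[X] :=
  if p = 1 then X + C a else X * (X * divX p + C a) + C (p.coeff 0)

theorem goodP_one : GoodP (1 : F[X]) := ⟨monic_one, by simp⟩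

theorem goodP_red (p : F[X]) (hp : GoodP p) (h1 : p ≠ 1) :
    ∃ (a : F) (r : F[X]), GoodP r ∧ p.natDegree = r.natDegree + 1 ∧ extP a r = p ∧
      (r = 1 → a ≠ 0) := by
  obtain ⟨hm, h0⟩ := hp
  have hd : p.natDegree ≠ 0 := fun h => h1 (hm.natDegree_eq_zero.1 h)
  by_cases hd1 : p.natDegree = 1
  · refine ⟨p.coeff 0, 1, goodP_one, by simp [hd1], ?_, fun _ => h0⟩
    rw [extP, if_pos rfl]
    exact (hm.eq_X_add_C hd1).symm
  · have hd2 : 2 ≤ p.natDegree := by omega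
    set r := X * divX (divX p) + C (p.coeff 0) with hr
    have e1 : X * divX p + C (p.coeff 0) = p := X_mul_divX_add p
    have e2 : X * divX (divX p) + C (p.coeff 1) = divX p := by
      have := X_mul_divX_add (divX p)
      simpa [coeff_divX] using this
    have hdd : (divX (divX p)).natDegree = p.natDegree - 2 := by
      simp [natDegree_divX_eq_natDegree_tsub_one]; omega
    have hmm : (divX (divX p)).Monic := by
      rw [Monic, leadingCoeff, hdd, coeff_divX, coeff_divX]
      have : p.natDegree - 2 + 1 + 1 = p.natDegree := by omega
      rw [this]; exact hm
    have hXd : (X * divX (divX p)).natDegree = p.natDegree - 1 := by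
      rw [monic_X.natDegree_mul hmm, hdd, natDegree_X]; omega
    have hXm : (X * divX (divX p)).Monic := monic_X.mul hmm
    have hrd : r.natDegree = p.natDegree - 1 := by
      rw [hr, natDegree_add_C, hXd]
    have hrm : r.Monic := by
      apply hXm.add_of_left
      apply lt_of_le_of_lt degree_C_le
      rw [← natDegree_pos_iff_degree_pos, hXd]; omega
    have hr1 : r ≠ 1 := by
      intro h; rw [h] at hrd; simp at hrd; omega
    have hr0 : r.coeff 0 = p.coeff 0 := by simp [hr]
    refine ⟨p.coeff 1, r, ⟨hrm, by rwa [hr0]⟩, by omega, ?_, fun h => absurd h hr1⟩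
    have hdr : divX r = divX (divX p) := by
      ext k; simp [hr, coeff_divX]
    rw [extP, if_neg hr1, hr0, hdr, e2, e1]

theorem TS_finite [Finite F] (N j n : ℕ) (hj : 1 ≤ j) : (TS F N j n).Finite := by
  have hf : ({p : F[X] | p ∈ degreeLT F (n+1)}).Finite := by
    have : Module.Finite F (degreeLT F (n+1)) := inferInstance
    have : Finite (degreeLT F (n+1)) := Module.finite_of_finite F
    exact Set.toFinite (degreeLT F (n+1) : Set F[X])
  have hpi := Set.Finite.pi' (ι := Fin (N+1)) (t := fun _ => {p : F[X] | p ∈ degreeLT F (n+1)})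
    (fun _ => hf)
  refine Set.Finite.of_finite_image (f := fun h (i : Fin (N+1)) => h i) (hpi.subset ?_) ?_
  · rintro _ ⟨h, ⟨hg, h1, hs⟩, rfl⟩ i
    simp only [Set.mem_ofPred_eq, mem_degreeLT]
    by_cases hi : (i : ℕ) < j
    · rw [h1 i (Or.inl hi), degree_one]; exact_mod_cast Nat.succ_pos n
    · have : (i:ℕ) * (h i).natDegree ≤ n := by
        rw [← hs]
        exact Finset.single_le_sum (f := fun i => i * (h i).natDegree) (fun _ _ => Nat.zero_le _)
          (Finset.mem_range.2 i.2)
      have h2 : (h i).natDegree ≤ n := le_trans (Nat.le_mul_of_pos_left _ (by omega)) this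
      exact (natDegree_lt_iff_degree_lt (hg i).1.ne_zero).1 (by omega)
  · intro h hh h' hh' he
    ext1 i
    by_cases hi : i < N + 1
    · exact congrFun he ⟨i, hi⟩
    · rw [hh.2.1 i (Or.inr (by omega)), hh'.2.1 i (Or.inr (by omega))]

theorem TS_succ (N j n : ℕ) (h : ℕ → F[X]) :
    h ∈ TS F N (j+1) n ↔ h ∈ TS F N j n ∧ h j = 1 := by
  constructor
  · rintro ⟨a, b, c⟩
    exact ⟨⟨a, fun i hi => b i (by omega), c⟩, b j (by omega)⟩
  · rintro ⟨⟨a, b, c⟩, d⟩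
    refine ⟨a, fun i hi => ?_, c⟩
    by_cases hij : i = j
    · rw [hij, d]
    · exact b i (by omega)

theorem TS_rec [Fintype F] (N j n : ℕ) (hj : 1 ≤ j) (hjN : j ≤ N) :
    (TS F N j (n+j)).ncard + (TS F N (j+1) n).ncard ≤
      Fintype.card F * (TS F N j n).ncard + (TS F N (j+1) (n+j)).ncard := by
  classical
  have f1 := TS_finite (F := F) N j n hj
  have f2 := TS_finite (F := F) N j (n+j) hj
  have f3 := TS_finite (F := F) N (j+1) n (by omega)
  have f4 := TS_finite (F := F) N (j+1) (n+j) (by omega)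
  have s1 : TS F N (j+1) (n+j) ⊆ TS F N j (n+j) := fun h hh => ((TS_succ _ _ _ _).1 hh).1
  have s2 : TS F N (j+1) n ⊆ TS F N j n := fun h hh => ((TS_succ _ _ _ _).1 hh).1
  have hD := Set.ncard_sdiff_add_ncard_of_subset s1 f2
  have fA : ((Set.univ : Set F) ×ˢ TS F N j n).Finite := Set.finite_univ.prod f1
  have sB : ({0} : Set F) ×ˢ TS F N (j+1) n ⊆ (Set.univ : Set F) ×ˢ TS F N j n :=
    Set.prod_mono (Set.subset_univ _) s2
  have hE := Set.ncard_sdiff_add_ncard_of_subset sB fA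
  rw [Set.ncard_prod, Set.ncard_prod, Set.ncard_singleton, one_mul, Set.ncard_univ,
    Nat.card_eq_fintype_card] at hE
  have hsub : TS F N j (n+j) \ TS F N (j+1) (n+j) ⊆
      (fun x : F × (ℕ → F[X]) => Function.update x.2 j (extP x.1 (x.2 j))) ''
        (((Set.univ : Set F) ×ˢ TS F N j n) \ (({0} : Set F) ×ˢ TS F N (j+1) n)) := by
    rintro h ⟨hh, hn⟩
    have hj1 : h j ≠ 1 := fun h1 => hn ((TS_succ _ _ _ _).2 ⟨hh, h1⟩)
    obtain ⟨hg, h1, hs⟩ := hh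
    obtain ⟨a, r, gr, dr, er, hr⟩ := goodP_red (h j) (hg j) hj1
    refine ⟨(a, Function.update h j r), ⟨⟨Set.mem_univ _, ?_, ?_, ?_⟩, ?_⟩, ?_⟩
    · intro i
      by_cases hij : i = j
      · subst hij; simpa using gr
      · simpa [hij] using hg i
    · intro i hi
      have hij : i ≠ j := by omega
      simpa [hij] using h1 i hi
    · have hjm : j ∈ Finset.range (N+1) := Finset.mem_range.2 (by omega)
      rw [← Finset.add_sum_erase _ _ hjm] at hs ⊢
      have : ∑ i ∈ (Finset.range (N+1)).erase j, i * (Function.update h j r i).natDegree =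
        ∑ i ∈ (Finset.range (N+1)).erase j, i * (h i).natDegree := by
        refine Finset.sum_congr rfl fun i hi => ?_
        simp [Finset.ne_of_mem_erase hi]
      simp only [this, Function.update_self]
      rw [dr, mul_add] at hs
      omega
    · rintro ⟨ha, hb⟩
      have := ((TS_succ _ _ _ _).1 hb).2
      simp only [Function.update_self] at this
      exact hr this ha
    · simp [er]
  have h1 := Set.ncard_le_ncard hsub ((fA.subset Set.sdiff_subset).image _)
  have h2 := Set.ncard_image_le (f := (fun x : F × (ℕ → F[X]) =>
    Function.update x.2 j (extP x.1 (x.2 j)))) (fA.subset (Set.sdiff_subset (t := ({0} : Set F) ×ˢ TS F N (j+1) n)))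
  omega

theorem TS_empty (N j n : ℕ) (hn : 0 < n) (hj : n < j) : TS F N j n = ∅ := by
  rw [Set.eq_empty_iff_forall_notMem]
  rintro h ⟨hg, h1, hs⟩
  have : ∃ i ∈ Finset.range (N+1), i * (h i).natDegree ≠ 0 := by
    by_contra! hc
    rw [Finset.sum_eq_zero hc] at hs; omega
  obtain ⟨i, hi, hne⟩ := this
  have hle : i * (h i).natDegree ≤ n := by
    rw [← hs]
    exact Finset.single_le_sum (f := fun i => i * (h i).natDegree) (fun _ _ => Nat.zero_le _) hi
  have hd : (h i).natDegree ≠ 0 := fun h => hne (by simp [h])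
  have hij : ¬ i < j := by
    intro hij; apply hd; rw [h1 i (Or.inl hij)]; simp
  have := Nat.le_mul_of_pos_right i (Nat.pos_of_ne_zero hd)
  omega

theorem TS_zero (N : ℕ) : (TS F N 1 0).ncard ≤ 1 := by
  have : TS F N 1 0 ⊆ {fun _ => 1} := by
    rintro h ⟨hg, h1, hs⟩
    rw [Set.mem_singleton_iff]
    ext1 i
    by_cases hi : i < 1 ∨ N < i
    · exact h1 i hi
    · rw [Finset.sum_eq_zero_iff] at hs
      have := hs i (Finset.mem_range.2 (by omega))
      rw [mul_eq_zero] at this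
      exact (hg i).1.natDegree_eq_zero.1 (by omega)
  simpa using Set.ncard_le_ncard this

theorem TS_bound [Fintype F] (N n : ℕ) (hn : n ≤ N) :
    ∑ k ∈ Finset.range (n+1), (TS F N (k+1) (n-k)).ncard ≤ Fintype.card F ^ n := by
  induction n with
  | zero => simpa using TS_zero N
  | succ n ih =>
    have ih := ih (by omega)
    have key : ∑ k ∈ Finset.range (n+1), ((TS F N (k+1) (n+1)).ncard + (TS F N (k+2) (n-k)).ncard) ≤
        ∑ k ∈ Finset.range (n+1), (Fintype.card F * (TS F N (k+1) (n-k)).ncard +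
          (TS F N (k+2) (n+1)).ncard) := by
      refine Finset.sum_le_sum fun k hk => ?_
      rw [Finset.mem_range] at hk
      have := TS_rec (F := F) N (k+1) (n-k) (by omega) (by omega)
      have e : n - k + (k+1) = n+1 := by omega
      rw [e] at this
      exact this
    rw [Finset.sum_add_distrib, Finset.sum_add_distrib, ← Finset.mul_sum] at key
    have t1 := Finset.sum_range_succ (fun k => (TS F N (k+1) (n+1)).ncard) (n+1)
    have t2 := Finset.sum_range_succ' (fun k => (TS F N (k+1) (n+1)).ncard) (n+1)
    have t3 : (TS F N (n+1+1) (n+1)).ncard = 0 := by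
      rw [TS_empty _ _ _ (by omega) (by omega)]; simp
    have t4 := Finset.sum_range_succ' (fun k => (TS F N (k+1) (n+1-k)).ncard) (n+1)
    have t5 : ∑ k ∈ Finset.range (n+1), (TS F N (k+1+1) (n+1-(k+1))).ncard =
      ∑ k ∈ Finset.range (n+1), (TS F N (k+2) (n-k)).ncard :=
      Finset.sum_congr rfl fun k _ => by congr 2; omega
    have t6 := Nat.mul_le_mul_left (Fintype.card F) ih
    rw [pow_succ, mul_comm (_ ^ n)]
    simp only [zero_add, Nat.sub_zero] at t1 t2 t4
    have t7 : ∑ k ∈ Finset.range (n+1), (TS F N (k+1+1) (n+1)).ncard =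
      ∑ k ∈ Finset.range (n+1), (TS F N (k+2) (n+1)).ncard := rfl
    omega

theorem TS_le [Fintype F] (n : ℕ) : (TS F n 1 n).ncard ≤ Fintype.card F ^ n := by
  refine le_trans ?_ (TS_bound n n le_rfl)
  exact Finset.single_le_sum (f := fun k => (TS F n (k+1) (n-k)).ncard) (fun _ _ => Nat.zero_le _)
    (Finset.mem_range.2 (Nat.succ_pos n))

end comb

section linalg
open Module

theorem exists_decomp {F : Type} [Field F] {V : Type} [AddCommGroup V] [Module F V]
    [FiniteDimensional F V] (f : V →ₗ[F] V) :
    ∃ (ι : Type) (_ : Fintype ι) (p : ι → F[X]) (e : ι → ℕ), (∀ i, Irreducible (p i)) ∧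
      (∀ i, (p i).Monic) ∧ (∀ i, e i ≠ 0) ∧
      Nonempty (AEval' f ≃ₗ[F[X]] ∀ i, F[X] ⧸ Ideal.span {p i ^ e i}) := by
  classical
  have ht : IsTorsion F[X] (AEval' f) := AEval.isTorsion_of_finiteDimensional F V f
  obtain ⟨ι, hι, p, hp, e, ⟨φ⟩⟩ := equiv_directSum_of_isTorsion ht
  have φ2 := φ.trans (DirectSum.linearEquivFunOnFintype F[X] ι
    (fun i => F[X] ⧸ (Submodule.span F[X] {p i ^ e i})))
  let ρ : (∀ i, F[X] ⧸ (Submodule.span F[X] {p i ^ e i})) →ₗ[F[X]]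
      (∀ i : {i // e i ≠ 0}, F[X] ⧸ (Submodule.span F[X] {p i.1 ^ e i.1})) :=
    LinearMap.pi fun i => LinearMap.proj i.1
  have hρ : Function.Bijective ρ := by
    constructor
    · intro x y hxy
      ext1 i
      by_cases hi : e i = 0
      · have : Subsingleton (F[X] ⧸ (Submodule.span F[X] {p i ^ e i})) := by
          rw [Submodule.Quotient.subsingleton_iff, hi, pow_zero]
          exact Ideal.span_singleton_one
        exact Subsingleton.elim _ _
      · exact congrFun hxy ⟨i, hi⟩
    · intro y
      refine ⟨fun i => if h : e i ≠ 0 then y ⟨i, h⟩ else 0, ?_⟩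
      ext1 i
      change (if h : e i.1 ≠ 0 then y ⟨i.1, h⟩ else 0) = y i
      rw [dif_pos i.2]
  have φ3 := φ2.trans (LinearEquiv.ofBijective ρ hρ)
  have φ4 : (∀ i : {i // e i ≠ 0}, F[X] ⧸ (Submodule.span F[X] {p i.1 ^ e i.1})) ≃ₗ[F[X]]
      (∀ i : {i // e i ≠ 0}, F[X] ⧸ Ideal.span {(normalize (p i.1)) ^ e i.1}) := by
    refine LinearEquiv.piCongrRight fun i => Submodule.quotEquivOfEq _ _ ?_
    exact Ideal.span_singleton_eq_span_singleton.2 ((associated_normalize (p i.1)).pow_pow)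
  have q1 : ∀ i : {i // e i ≠ 0}, Irreducible (normalize (p i.1)) :=
    fun i => (associated_normalize _).irreducible (hp i.1)
  have q2 : ∀ i : {i // e i ≠ 0}, (normalize (p i.1)).Monic :=
    fun i => monic_normalize (hp i.1).ne_zero
  exact ⟨{i // e i ≠ 0}, inferInstance, fun i => normalize (p i.1), fun i => e i.1,
    q1, q2, fun i => i.2, ⟨φ3.trans φ4⟩⟩

theorem pi_equiv {F : Type} [Field F] {ι ι' : Type} (p : ι → F[X]) (e : ι → ℕ)
    (p' : ι' → F[X]) (e' : ι' → ℕ) (σ : ι ≃ ι') (hp : ∀ i, p i = p' (σ i))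
    (he : ∀ i, e i = e' (σ i)) :
    Nonempty ((∀ i, F[X] ⧸ Ideal.span {p i ^ e i}) ≃ₗ[F[X]]
      ∀ i, F[X] ⧸ Ideal.span {p' i ^ e' i}) := by
  obtain rfl : p = p' ∘ σ := funext hp
  obtain rfl : e = e' ∘ σ := funext he
  exact ⟨LinearEquiv.piCongrLeft F[X] (fun i => F[X] ⧸ Ideal.span {p' i ^ e' i}) σ⟩

open Classical in
noncomputable def tup {F : Type} [Field F] {ι : Type} [Fintype ι] (p : ι → F[X]) (e : ι → ℕ)
    (k : ℕ) : F[X] := ∏ i with e i = k, p i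

theorem tup_inj {F : Type} [Field F] {ι ι' : Type} [Fintype ι] [Fintype ι']
    (p : ι → F[X]) (e : ι → ℕ)
    (p' : ι' → F[X]) (e' : ι' → ℕ) (hi : ∀ i, Irreducible (p i)) (hi' : ∀ i, Irreducible (p' i))
    (hm : ∀ i, (p i).Monic) (hm' : ∀ i, (p' i).Monic) (h : tup p e = tup p' e') :
    ∃ σ : ι ≃ ι', (∀ i, p i = p' (σ i)) ∧ ∀ i, e i = e' (σ i) := by
  classical
  have key : ∀ {κ : Type} [Fintype κ] (p : κ → F[X]) (e : κ → ℕ) (_ : ∀ i, Irreducible (p i))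
      (_ : ∀ i, (p i).Monic) (c : F[X] × ℕ),
      Fintype.card {i // (p i, e i) = c} =
        (UniqueFactorizationMonoid.normalizedFactors (tup p e c.2)).count c.1 := by
    intro κ _ p e hi hm c
    have e1 : tup p e c.2 = (((Finset.univ.filter fun i => e i = c.2).val.map p)).prod := by
      rw [tup, Finset.prod]
    rw [e1, UniqueFactorizationMonoid.normalizedFactors_prod_eq, Multiset.map_map,
      Multiset.count_map, Fintype.card_subtype, Finset.card, ← Finset.filter_val,
      Finset.filter_filter]
    · congr 2
      ext i
      simp only [Finset.mem_filter, Finset.mem_univ, true_and, Function.comp,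
        (hm i).normalize_eq_self, Prod.ext_iff]
      tauto
    · intro a ha
      rw [Multiset.mem_map] at ha
      obtain ⟨i, _, rfl⟩ := ha
      exact hi i
  have hc : ∀ c : F[X] × ℕ, Nonempty ({i // (p i, e i) = c} ≃ {i // (p' i, e' i) = c}) := by
    intro c
    rw [← Fintype.card_eq, key p e hi hm, key p' e' hi' hm', h]
  let σ := Equiv.ofFiberEquiv fun c => (hc c).some
  have hσ : ∀ i, (p' (σ i), e' (σ i)) = (p i, e i) := fun i =>
    Equiv.ofFiberEquiv_map (f := fun i => (p i, e i)) (g := fun i => (p' i, e' i)) _ i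
  exact ⟨σ, fun i => (congrArg Prod.fst (hσ i)).symm, fun i => (congrArg Prod.snd (hσ i)).symm⟩

theorem tup_mem {F : Type} [Field F] {V : Type} [AddCommGroup V] [Module F V]
    [FiniteDimensional F V] (f : V →ₗ[F] V) (hf : Function.Surjective f)
    (ι : Type) [Fintype ι] (p : ι → F[X]) (e : ι → ℕ) (hi : ∀ i, Irreducible (p i))
    (hm : ∀ i, (p i).Monic) (he : ∀ i, e i ≠ 0)
    (φ : AEval' f ≃ₗ[F[X]] ∀ i, F[X] ⧸ Ideal.span {p i ^ e i}) :
    tup p e ∈ TS F (finrank F V) 1 (finrank F V) := by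
  classical
  have hfin : ∀ i, Module.Finite F (F[X] ⧸ Ideal.span {p i ^ e i}) :=
    fun i => ((hm i).pow (e i)).finite_quotient
  have hrank : ∑ i, e i * (p i).natDegree = finrank F V := by
    have h1 : finrank F V = finrank F (AEval' f) := (AEval'.of f).finrank_eq
    have h2 : finrank F (AEval' f) = finrank F (∀ i, F[X] ⧸ Ideal.span {p i ^ e i}) :=
      (φ.restrictScalars F).finrank_eq
    rw [h1, h2, finrank_pi_fintype]
    refine Finset.sum_congr rfl fun i _ => ?_
    rw [finrank_quotient_span_eq_natDegree, natDegree_pow]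
  have hle : ∀ i, e i ≤ finrank F V := by
    intro i
    rw [← hrank]
    refine le_trans (Nat.le_mul_of_pos_right _ (hi i).natDegree_pos)
      (Finset.single_le_sum (f := fun i => e i * (p i).natDegree) (fun _ _ => Nat.zero_le _)
        (Finset.mem_univ i))
  have h0 : ∀ i, (p i).coeff 0 ≠ 0 := by
    intro i hz
    have hX : (X : F[X]) ∣ p i := X_dvd_iff.2 hz
    obtain ⟨v, hv⟩ := hf ((AEval'.of f).symm (φ.symm (Pi.single i 1)))
    have h1 : (X : F[X]) • (AEval'.of f v) = φ.symm (Pi.single i 1) := by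
      rw [AEval'.X_smul_of, hv]; simp
    have h2 := congrArg φ h1
    rw [map_smul, LinearEquiv.apply_symm_apply] at h2
    have h3 := congrFun h2 i
    rw [Pi.smul_apply, Pi.single_eq_same] at h3
    obtain ⟨r, hr⟩ := Ideal.Quotient.mk_surjective (φ (AEval'.of f v) i)
    rw [← hr] at h3
    have h4 : Ideal.Quotient.mk (Ideal.span {p i ^ e i}) (X * r) =
      Ideal.Quotient.mk (Ideal.span {p i ^ e i}) 1 := h3
    rw [Ideal.Quotient.mk_eq_mk_iff_sub_mem, Ideal.mem_span_singleton] at h4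
    have h5 : (X : F[X]) ∣ X * r - 1 := (hX.trans (dvd_pow_self _ (he i))).trans h4
    have h6 : (X : F[X]) ∣ 1 := (dvd_sub_right (dvd_mul_right X r)).1 h5
    exact not_isUnit_X (isUnit_of_dvd_one h6)
  have hmt : ∀ k, (tup p e k).Monic := fun k => monic_prod_of_monic _ _ fun i _ => hm i
  refine ⟨fun k => ⟨hmt k, ?_⟩, ?_, ?_⟩
  · rw [tup, coeff_zero_prod, Finset.prod_ne_zero_iff]
    exact fun i _ => h0 i
  · intro k hk
    rw [tup, Finset.filter_eq_empty_iff.2, Finset.prod_empty]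
    intro i _ h
    have := hle i
    have := he i
    omega
  · refine Eq.trans ?_ hrank
    rw [← Finset.sum_fiberwise_of_maps_to (s := Finset.univ)
      (t := Finset.range (finrank F V + 1)) (g := e)
      (fun i _ => Finset.mem_range.2 (Nat.lt_succ_of_le (hle i)))]
    refine Finset.sum_congr rfl fun k _ => ?_
    rw [tup, natDegree_prod_of_monic _ _ fun i _ => hm i, Finset.mul_sum]
    refine Finset.sum_congr (by congr!) fun i hi => ?_
    rw [(Finset.mem_filter.1 hi).2]

theorem conj_of_equiv {F : Type} [Field F] {n : ℕ} (A B : GL (Fin n) F)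
    (φ : AEval' (Matrix.toLin' A.1) ≃ₗ[F[X]] AEval' (Matrix.toLin' B.1)) : IsConj A B := by
  let ψ : (Fin n → F) ≃ₗ[F] (Fin n → F) :=
    ((AEval'.of (Matrix.toLin' A.1)).trans (φ.restrictScalars F)).trans
      (AEval'.of (Matrix.toLin' B.1)).symm
  have hψ : ∀ v, ψ (Matrix.toLin' A.1 v) = Matrix.toLin' B.1 (ψ v) := by
    intro v
    have h1 := φ.map_smul (X : F[X]) (AEval'.of (Matrix.toLin' A.1) v)
    rw [AEval'.X_smul_of] at h1
    have h2 := congrArg (AEval'.of (Matrix.toLin' B.1)).symm h1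
    rw [AEval.of_symm_X_smul] at h2
    exact h2
  let P := LinearMap.toMatrix' (ψ : (Fin n → F) →ₗ[F] (Fin n → F))
  let Q := LinearMap.toMatrix' (ψ.symm : (Fin n → F) →ₗ[F] (Fin n → F))
  have hPQ : P * Q = 1 := by
    rw [← LinearMap.toMatrix'_comp]; simp
  have hQP : Q * P = 1 := by
    rw [← LinearMap.toMatrix'_comp]; simp
  rw [isConj_iff]
  refine ⟨⟨P, Q, hPQ, hQP⟩, ?_⟩
  rw [mul_inv_eq_iff_eq_mul]
  apply Units.ext
  change P * A.1 = B.1 * P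
  apply Matrix.toLin'.injective
  apply LinearMap.ext
  intro v
  simpa [P, Matrix.toLin'_mul] using hψ v

theorem conj_le {F : Type} [Field F] [Fintype F] (n : ℕ) :
    Nat.card (ConjClasses (GL (Fin n) F)) ≤ (TS F n 1 n).ncard := by
  classical
  have hA : ∀ A : GL (Fin n) F, ∃ h ∈ TS F n 1 n, ∃ (ι : Type) (_ : Fintype ι) (p : ι → F[X])
      (e : ι → ℕ), (∀ i, Irreducible (p i)) ∧ (∀ i, (p i).Monic) ∧ 
      Nonempty (AEval' (Matrix.toLin' A.1) ≃ₗ[F[X]] ∀ i, F[X] ⧸ Ideal.span {p i ^ e i}) ∧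
      h = tup p e := by
    intro A
    obtain ⟨ι, hι, p, e, hi, hm, he, ⟨φ⟩⟩ := exists_decomp (Matrix.toLin' A.1)
    refine ⟨tup p e, ?_, ι, hι, p, e, hi, hm, ⟨φ⟩, rfl⟩
    have hs : Function.Surjective (Matrix.toLin' A.1) := by
      intro v
      refine ⟨Matrix.toLin' A⁻¹.1 v, ?_⟩
      rw [← LinearMap.comp_apply, ← Matrix.toLin'_mul]
      simp [← Units.val_mul]
    have := tup_mem _ hs ι p e hi hm he φ
    simpa using this
  choose t ht using hA
  let T : ConjClasses (GL (Fin n) F) → TS F n 1 n :=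
    fun c => ⟨t (Quotient.out c), (ht _).1⟩
  have hT : Function.Injective T := by
    intro c d hcd
    have h1 : t (Quotient.out c) = t (Quotient.out d) := congrArg Subtype.val hcd
    obtain ⟨ι, hι, p, e, hi, hm, ⟨φ⟩, hx⟩ := (ht (Quotient.out c)).2
    obtain ⟨ι', hι', p', e', hi', hm', ⟨φ'⟩, hx'⟩ := (ht (Quotient.out d)).2
    rw [hx, hx'] at h1
    obtain ⟨σ, hσ, hσ'⟩ := tup_inj p e p' e' hi hi' hm hm' h1
    obtain ⟨χ⟩ := pi_equiv p e p' e' σ hσ hσ'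
    have h2 := conj_of_equiv _ _ ((φ.trans χ).trans φ'.symm)
    have h3 := ConjClasses.mk_eq_mk_iff_isConj.2 h2
    have h4 : ∀ c : ConjClasses (GL (Fin n) F), ConjClasses.mk (Quotient.out c) = c :=
      fun c => Quotient.out_eq c
    rwa [h4, h4] at h3
  have hfin : Finite (TS F n 1 n) := TS_finite n 1 n le_rfl
  exact Nat.card_le_card_of_injective T hT
end linalg

end main

theorem card_conjClasses_GL_le
    (q : ℕ) (hq : IsPrimePow q)
    (F : Type) [Field F] [Fintype F] (hFq : Fintype.card F = q)
    (n : ℕ) (hn : 0 < n) :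
    Nat.card (ConjClasses (GL (Fin n) F)) ≤ q ^ n ∧
      Nat.card {χ : GL (Fin n) F → ℂ // IsIrrChar _ χ} ≤ q ^ n := by
  have h1 : Nat.card (ConjClasses (GL (Fin n) F)) ≤ q ^ n := by
    rw [← hFq]
    exact (conj_le n).trans (TS_le n)
  exact ⟨h1, (irr_le _).trans h1⟩
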